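/- Let n ≥ 2 and let V be a nonempty set of monomials of degree d in K[x_1,…,x_n]. Then for every i = 1, 2, …, n one has |MV| ≥ |K_i(V)|^{<n−1>} + |D_i(V)|^{<n−2>}. -/

import Mathlib

/-!
Fix a variable `x_i` and split `V` into the part `D` of least `i`-th exponent and the rest `K`. The
members of `MV` of least `i`-th exponent contain the products of `D` with the other `n - 1`
variables, and the remaining ones contain `MK`. As `D` lives in `n - 1` variables, the theorem
follows from Macaulay's growth bound `|MW| ≥ |W|^{<n-1>}` for finite sets `W` of monomials in `n`
variables (`macUp_le_card_shad`), applied to `K` and to `D`. For `|V| = 1`, where `K_i(V) = V` by convention, it is the growth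
bound itself.

The growth bound is proved by the same splitting, by induction on the number of variables and on
`|V|`. Since `x_i V` also lies in the part of `MV` of larger `i`-th exponent, writing `k = |K|` and
`e = |D|`, one gets `|MV| ≥ e^{<n-2>} + max (k^{<n-1>}, k + e)`, and no compression is needed: this
is already at least `(k + e)^{<n-1>}`, by a purely numerical inequality (`macUp_add_le`).

The numerical inequality is stated for the excess `h^{<n>} - h` (`exc_add_le`) and proved by
induction on `n`, peeling off leading binomial coefficients. Which coefficient is peeled off depends
on whether `e` exceeds the excess of `k`. The case where `e` is smaller than the leading coefficient
requires the exchange inequality `exc_exchange`: for two numbers bounded by a binomial coefficient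
`C(a, n)`, moving mass from the smaller to the larger one up to that cap does not increase the total
excess.
-/

open Finset

/-- `macUp n h` is `h^{<n>}`, computed via the greedy (Macaulay) binomial
representation `h = C(a_n, n) + C(a_{n-1}, n-1) + ⋯` (equivalently
`h = C(h(n)+n, n) + ⋯ + C(h(i)+i, i)` with `h(n) ≥ ⋯ ≥ h(i) ≥ 0`), giving
`h^{<n>} = C(a_n+1, n) + C(a_{n-1}+1, n-1) + ⋯`; `macUp n 0 = 0`, `macUp 0 1 = 1`. -/
def macUp : ℕ → ℕ → ℕ
  | 0, h => h
  | n+1, h =>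
    if h = 0 then 0
    else
      let a := Nat.findGreatest (fun a => Nat.choose a (n+1) ≤ h) (h + n + 1)
      Nat.choose (a+1) (n+1) + macUp n (h - Nat.choose a (n+1))
/-- Monomials in `K[x_1,…,x_n]` are identified with their exponent vectors
`Fin n → ℕ`; the degree of `v` is `∑ i, v i`.  `shad V` is the set
`MV = {x_j v : v ∈ V, 1 ≤ j ≤ n}`. -/
def shad {n : ℕ} (V : Finset (Fin n → ℕ)) : Finset (Fin n → ℕ) :=
  (Finset.univ ×ˢ V).image fun p => p.2 + Pi.single p.1 1
/-- `gcd(V)` of a set of monomials: the exponentwise minimum. -/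
noncomputable def gcdMon {n : ℕ} (V : Finset (Fin n → ℕ)) : Fin n → ℕ :=
  fun i => sInf ((fun v => v i) '' (V : Set (Fin n → ℕ)))
open Classical in
/-- `K_i(V)`: for `|V| ≤ 1` it is `V`; otherwise the set of monomials of `V`
divisible by `x_i · gcd(V)`. -/
noncomputable def Kset {n : ℕ} (V : Finset (Fin n → ℕ)) (i : Fin n) : Finset (Fin n → ℕ) :=
  if V.card ≤ 1 then V
  else V.filter fun v => ∀ j, gcdMon V j + (Pi.single i 1 : Fin n → ℕ) j ≤ v j

/-- `D_i(V) = V \ K_i(V)`. -/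
noncomputable def Dset {n : ℕ} (V : Finset (Fin n → ℕ)) (i : Fin n) : Finset (Fin n → ℕ) :=
  V \ Kset V i

namespace MacaulayGrowth

/-! ### The recursion for `h^{<n>}` -/

lemma macUp_zero_right (n : ℕ) : macUp n 0 = 0 := by
  cases n <;> simp [macUp]

/-- `macUp` evaluated on a number presented by its greedy leading term `C(a, n + 1)`. -/
lemma macUp_of_lt {n a t : ℕ} (ha : n + 1 ≤ a) (ht : t < a.choose n) :
    macUp (n + 1) (a.choose (n + 1) + t) = (a + 1).choose (n + 1) + macUp n t := by
  have hpos : 0 < a.choose (n + 1) := Nat.choose_pos ha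
  -- the search bound `h + n + 1` in `macUp` is large enough, as `a - n ≤ C(a, n + 1)`
  have hbd : ∀ j, j + 1 ≤ (n + 1 + j).choose (n + 1) := by
    intro j
    induction j with
    | zero => simp
    | succ j ih =>
      have h1 : (n + 1 + (j + 1)).choose (n + 1)
          = (n + 1 + j).choose n + (n + 1 + j).choose (n + 1) := Nat.choose_succ_succ _ _
      have h2 : 0 < (n + 1 + j).choose n := Nat.choose_pos (by omega)
      omega
  obtain ⟨j, rfl⟩ := Nat.exists_eq_add_of_le ha
  have hj := hbd j
  have hfind : Nat.findGreatest
      (fun b => Nat.choose b (n + 1) ≤ (n + 1 + j).choose (n + 1) + t)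
      ((n + 1 + j).choose (n + 1) + t + n + 1) = n + 1 + j := by
    rw [Nat.findGreatest_eq_iff]
    refine ⟨by omega, fun _ => by omega, fun b hb _ hle => ?_⟩
    have h1 : (n + 1 + j + 1).choose (n + 1) ≤ b.choose (n + 1) :=
      Nat.choose_le_choose _ hb
    rw [Nat.choose_succ_succ] at h1
    simp only [Nat.succ_eq_add_one] at h1
    omega
  rw [macUp, if_neg (by omega)]
  simp only [hfind, Nat.add_sub_cancel_left]

lemma macUp_choose {n a : ℕ} (ha : n ≤ a) : macUp n (a.choose n) = (a + 1).choose n := by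
  cases n with
  | zero => simp [macUp]
  | succ n =>
    simpa [macUp_zero_right] using macUp_of_lt ha (t := 0) (Nat.choose_pos (by omega))

/-- The recursion of `macUp_of_lt` persists at the upper end `t = C(a, n)`, where the greedy leading
term has already become `C(a + 1, n + 1)`. -/
lemma macUp_of_le {n a t : ℕ} (ha : n ≤ a) (h0 : 0 < t ∨ n + 1 ≤ a) (ht : t ≤ a.choose n) :
    macUp (n + 1) (a.choose (n + 1) + t) = (a + 1).choose (n + 1) + macUp n t := by
  rcases ht.lt_or_eq with hlt | rfl
  · refine macUp_of_lt ?_ hlt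
    rcases h0 with h0 | h0
    · by_contra hna
      obtain rfl : a = n := by omega
      simp at hlt
      omega
    · exact h0
  · rw [macUp_choose ha, add_comm (a.choose (n + 1)), ← Nat.choose_succ_succ' a n,
      macUp_choose (by omega), Nat.choose_succ_succ' (a + 1) n, add_comm]

/-- The greedy leading term of a positive number. -/
lemma exists_lower (n : ℕ) {h : ℕ} (hh : 0 < h) :
    ∃ a t, n + 1 ≤ a ∧ t < a.choose n ∧ h = a.choose (n + 1) + t := by
  induction h, hh using Nat.le_induction with
  | base => exact ⟨n + 1, 0, le_rfl, by simp, by simp⟩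
  | succ h hh ih =>
    obtain ⟨a, t, ha, ht, rfl⟩ := ih
    rcases (Nat.succ_le_of_lt ht).lt_or_eq with h1 | h1
    · exact ⟨a, t + 1, ha, h1, by omega⟩
    · refine ⟨a + 1, 0, by omega, Nat.choose_pos (by omega), ?_⟩
      rw [Nat.choose_succ_succ']
      omega

/-- The largest leading term leaving a positive remainder; `a = n`, with leading term `0`, occurs
for `h = 1`. -/
lemma exists_upper (n : ℕ) {h : ℕ} (hh : 0 < h) :
    ∃ a t, n ≤ a ∧ 0 < t ∧ t ≤ a.choose n ∧ h = a.choose (n + 1) + t := by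
  obtain ⟨h, rfl⟩ := Nat.exists_eq_succ_of_ne_zero hh.ne'
  rcases Nat.eq_zero_or_pos h with rfl | h0
  · exact ⟨n, 1, le_rfl, one_pos, by simp, by simp⟩
  · obtain ⟨a, t, ha, ht, rfl⟩ := exists_lower n h0
    exact ⟨a, t + 1, by omega, by omega, ht, rfl⟩

lemma le_macUp (n h : ℕ) : h ≤ macUp n h := by
  induction n generalizing h with
  | zero => simp [macUp]
  | succ n ih =>
    rcases Nat.eq_zero_or_pos h with rfl | h0
    · simp
    · obtain ⟨a, t, ha, ht, rfl⟩ := exists_lower n h0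
      rw [macUp_of_lt ha ht]
      have := ih t
      have := Nat.choose_le_choose (n + 1) (Nat.le_succ a)
      simp only [Nat.succ_eq_add_one] at this
      omega

/-- The excess `h^{<n>} - h`; the truncated subtraction is exact by `le_macUp`. -/
def exc (n h : ℕ) : ℕ := macUp n h - h

lemma macUp_eq (n h : ℕ) : macUp n h = h + exc n h := by
  have := le_macUp n h
  unfold exc
  omega

@[simp] lemma exc_zero_left (h : ℕ) : exc 0 h = 0 := by simp [exc, macUp]

@[simp] lemma exc_zero_right (n : ℕ) : exc n 0 = 0 := by simp [exc, macUp_zero_right]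

/-- The recursion for the excess. It holds at both ends `t = 0` and `t = C(a, n)`, so a number may
be expanded by its greedy representation or by the next smaller leading term. -/
lemma exc_rec {n a t : ℕ} (ha : n ≤ a) (h0 : 0 < t ∨ n + 1 ≤ a) (ht : t ≤ a.choose n) :
    exc (n + 1) (a.choose (n + 1) + t) = a.choose n + exc n t := by
  have h1 := macUp_of_le ha h0 ht
  rw [macUp_eq, macUp_eq n, Nat.choose_succ_succ'] at h1
  omega

lemma exc_choose {n a : ℕ} (ha : n + 1 ≤ a) : exc (n + 1) (a.choose (n + 1)) = a.choose n := by
  simpa using exc_rec (t := 0) (by omega) (Or.inr ha) (Nat.zero_le _)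

lemma exc_mono (n : ℕ) : Monotone (exc n) := by
  induction n with
  | zero => intro a b _; simp
  | succ n ih =>
    refine monotone_nat_of_le_succ fun h => ?_
    rcases Nat.eq_zero_or_pos h with rfl | h0
    · simp
    · obtain ⟨a, t, ha, ht, rfl⟩ := exists_lower n h0
      rw [add_assoc, exc_rec (by omega) (Or.inr ha) ht.le, exc_rec (by omega) (Or.inr ha) ht]
      exact Nat.add_le_add_left (ih (Nat.le_succ t)) _

/-! ### Inequalities for the excess -/

/-- Pushing mass from the smaller of two numbers to the larger one, up to a cap `C(a, n)` bounding
both, does not increase the total excess. -/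
lemma exc_exchange (n : ℕ) : ∀ a r e : ℕ, r ≤ a.choose n → e ≤ a.choose n →
    exc n (min (r + e) (a.choose n)) + exc n (r + e - a.choose n) ≤ exc n r + exc n e := by
  induction n with
  | zero => simp
  | succ n ih =>
    intro a r e hr he
    wlog hre : e ≤ r generalizing r e with H
    · have := H e r he hr (by omega)
      rwa [add_comm e r, add_comm (exc (n + 1) e)] at this
    induction e using Nat.strong_induction_on generalizing r with
    | _ e IH =>
    rcases Nat.eq_zero_or_pos e with rfl | he0
    · simp [min_eq_left hr, Nat.sub_eq_zero_of_le hr]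
    rcases hr.lt_or_eq with hr | rfl
    swap
    · rw [min_eq_right (by omega), Nat.add_sub_cancel_left]
    obtain ⟨b, t, hb, ht, rfl⟩ := exists_lower n (lt_of_lt_of_le he0 hre)
    -- `e` is expanded with a positive remainder `s`, so that the exchange makes `e` strictly smaller
    obtain ⟨c, s, hc, hs0, hs, rfl⟩ := exists_upper n he0
    have hcb : c ≤ b := by
      by_contra hlt
      have h1 := Nat.choose_le_choose (n + 1) (show b + 1 ≤ c by omega)
      rw [Nat.choose_succ_succ'] at h1
      omega
    have hsb : s ≤ b.choose n := hs.trans (Nat.choose_le_choose n hcb)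
    have hba : (b + 1).choose (n + 1) ≤ a.choose (n + 1) := by
      refine Nat.choose_le_choose _ ?_
      by_contra hlt
      have := Nat.choose_le_choose (n + 1) (show a ≤ b by omega)
      omega
    rw [Nat.choose_succ_succ'] at hba
    -- exchange the lower-order terms, by the inductive hypothesis on `n`
    have key := ih b t s ht.le hsb
    set p := min (t + s) (b.choose n) with hp
    set q := t + s - b.choose n with hq
    have hpq : p + q = t + s := by omega
    have h1 := exc_rec (n := n) (a := b) (t := p) (by omega) (Or.inr hb) (by omega)
    have h2 := exc_rec (n := n) (a := b) (t := t) (by omega) (Or.inr hb) (by omega)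
    have h3 := exc_rec (n := n) (a := c) (t := s) hc (Or.inl hs0) hs
    have h4 : exc (n + 1) (c.choose (n + 1) + q) ≤ c.choose n + exc n q := by
      by_cases h : 0 < q ∨ n + 1 ≤ c
      · exact (exc_rec hc h (by omega)).le
      · obtain rfl : c = n := by omega
        obtain hq0 : q = 0 := by omega
        simp [hq0]
    have h5 := IH (c.choose (n + 1) + q) (by omega) (b.choose (n + 1) + p)
      (by omega) (by omega) (by omega)
    have h6 : b.choose (n + 1) + p + (c.choose (n + 1) + q)
        = b.choose (n + 1) + t + (c.choose (n + 1) + s) := by omega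
    rw [h6] at h5
    omega

/-- The numerical inequality matching the decomposition of a set of `k + e` monomials into the `e`
monomials of least degree in one variable and the `k` others. -/
lemma exc_add_le (n : ℕ) : ∀ k e : ℕ,
    exc (n + 1) (k + e) ≤ exc n e + max (exc (n + 1) k) e := by
  induction n with
  | zero =>
    intro k e
    have h1 : ∀ h, 0 < h → exc 1 h = 1 := by
      intro h hh
      obtain ⟨a, t, ha, ht, rfl⟩ := exists_lower 0 hh
      simpa using exc_rec (n := 0) (by omega) (Or.inr ha) ht.le
    rcases Nat.eq_zero_or_pos e with rfl | he
    · simp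
    · rw [h1 _ (by omega)]
      simp
      omega
  | succ n ih =>
    intro k e
    rcases Nat.eq_zero_or_pos e with rfl | he
    · simp
    rcases le_or_gt e (exc (n + 1 + 1) k) with hek | hek
    · rw [max_eq_left hek]
      have hk : 0 < k := by
        rcases Nat.eq_zero_or_pos k with rfl | hk
        · simp at hek; omega
        · exact hk
      obtain ⟨a, r, ha, hr, rfl⟩ := exists_lower (n + 1) hk
      have hkr := exc_rec (n := n + 1) (by omega) (Or.inr ha) hr.le
      rw [hkr] at hek ⊢
      have hpas : (a + 1).choose (n + 1 + 1) = a.choose (n + 1) + a.choose (n + 1 + 1) :=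
        Nat.choose_succ_succ' _ _
      have hpas' : (a + 1).choose (n + 1) = a.choose n + a.choose (n + 1) :=
        Nat.choose_succ_succ' _ _
      rcases le_total e (a.choose (n + 1)) with hea | hea
      · have hex := exc_exchange (n + 1) a r e hr.le hea
        rcases le_total (r + e) (a.choose (n + 1)) with h | h
        · rw [min_eq_left h, Nat.sub_eq_zero_of_le h, exc_zero_right] at hex
          rw [add_assoc (a.choose _), exc_rec (by omega) (Or.inr ha) h]
          omega
        · rw [min_eq_right h, exc_choose (by omega)] at hex
          have h1 : a.choose (n + 1 + 1) + r + e
              = (a + 1).choose (n + 1 + 1) + (r + e - a.choose (n + 1)) := by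
            rw [Nat.choose_succ_succ']
            omega
          rw [h1, exc_rec (by omega) (Or.inr (by omega)) (by omega)]
          omega
      -- here `e` has the leading term `C(a, n + 1)`, which turns that of `k` into `C(a + 1, n + 2)`
      · obtain ⟨s, rfl⟩ := Nat.exists_eq_add_of_le hea
        have hs : s ≤ exc (n + 1) r := by omega
        have hs' : s ≤ a.choose n := by
          have h1 := exc_mono (n + 1) hr.le
          rw [exc_choose (by omega)] at h1
          omega
        have h1 : a.choose (n + 1 + 1) + r + (a.choose (n + 1) + s)
            = (a + 1).choose (n + 1 + 1) + (r + s) := by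
          rw [Nat.choose_succ_succ']
          omega
        rw [h1, exc_rec (by omega) (Or.inr (by omega)) (by omega),
          exc_rec (n := n) (by omega) (Or.inr (by omega)) hs']
        have := ih r s
        rw [max_eq_left hs] at this
        omega
    · rw [max_eq_right hek.le]
      obtain ⟨b, s, hb, hs, rfl⟩ := exists_lower n he
      have hpas' : (b + 1).choose (n + 1) = b.choose n + b.choose (n + 1) :=
        Nat.choose_succ_succ' _ _
      have hpas : (b + 1).choose (n + 1 + 1) = b.choose (n + 1) + b.choose (n + 1 + 1) :=
        Nat.choose_succ_succ' _ _
      -- by monotonicity `k` may be raised to `C(b, n + 1 + 1)` when it is smaller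
      obtain ⟨r, hkr, hr, hrs⟩ : ∃ r, k ≤ b.choose (n + 1 + 1) + r ∧ r ≤ b.choose (n + 1) ∧
          exc (n + 1) r ≤ s := by
        rcases le_total k (b.choose (n + 1 + 1)) with hk | hk
        · exact ⟨0, hk, Nat.zero_le _, by simp⟩
        · obtain ⟨r, rfl⟩ := Nat.exists_eq_add_of_le hk
          have hr : r ≤ b.choose (n + 1) := by
            by_contra hlt
            have h1 := exc_mono (n + 1 + 1)
              (show (b + 1).choose (n + 1 + 1) ≤ b.choose (n + 1 + 1) + r by omega)
            rw [exc_choose (by omega)] at h1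
            omega
          refine ⟨r, le_rfl, hr, ?_⟩
          rcases Nat.eq_zero_or_pos r with rfl | hr0
          · simp
          · rw [exc_rec (n := n + 1) (by omega) (Or.inl hr0) hr] at hek
            omega
      have h0 : b.choose (n + 1 + 1) + r + (b.choose (n + 1) + s)
          = (b + 1).choose (n + 1 + 1) + (r + s) := by
        rw [Nat.choose_succ_succ']
        omega
      have h1 := exc_mono (n + 1 + 1) (show k + (b.choose (n + 1) + s)
          ≤ (b + 1).choose (n + 1 + 1) + (r + s) by omega)
      rw [exc_rec (by omega) (Or.inr (by omega)) (by omega)] at h1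
      have h2 := exc_rec (n := n) (by omega) (Or.inr hb) hs.le
      have h3 := ih r s
      rw [max_eq_right hrs] at h3
      omega

lemma macUp_add_le (n k e : ℕ) :
    macUp (n + 1) (k + e) ≤ macUp n e + max (macUp (n + 1) k) (k + e) := by
  have := exc_add_le n k e
  simp only [macUp_eq]
  omega

/-! ### Slicing a set of monomials by one exponent -/

lemma mem_shad {n : ℕ} {V : Finset (Fin n → ℕ)} {w : Fin n → ℕ} :
    w ∈ shad V ↔ ∃ v ∈ V, ∃ j, v + Pi.single j 1 = w := by
  simp only [shad, mem_image, mem_product, mem_univ, true_and, Prod.exists]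
  exact ⟨fun ⟨j, v, hv, h⟩ => ⟨v, hv, j, h⟩, fun ⟨v, hv, j, h⟩ => ⟨j, v, hv, h⟩⟩

/-- If `c` bounds the `i`-th exponents of `V` from below, the members of `MV` of `i`-th exponent `c`
include all products of the slice `v i = c` with the other variables, while those of larger `i`-th
exponent include both `M` times the rest of `V` and `x_i V`. -/
lemma shad_split {m : ℕ} (V : Finset (Fin (m + 1) → ℕ)) (i : Fin (m + 1)) (c : ℕ)
    (hc : ∀ v ∈ V, c ≤ v i) :
    (shad ((V.filter fun v => v i = c).image i.removeNth)).card
      + max (shad (V.filter fun v => c < v i)).card V.card ≤ (shad V).card := by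
  rw [← card_filter_add_card_filter_not (s := shad V) (fun v => v i = c)]
  refine Nat.add_le_add ?_ (max_le ?_ ?_)
  · refine (card_le_card fun w hw => ?_).trans
      (card_image_le (f := fun v : Fin (m + 1) → ℕ => (i.removeNth v : Fin m → ℕ)))
    obtain ⟨u, hu, j, rfl⟩ := mem_shad.1 hw
    obtain ⟨v, hv, rfl⟩ := mem_image.1 hu
    obtain ⟨hvV, hvc⟩ := mem_filter.1 hv
    refine mem_image.2 ⟨v + Pi.single (i.succAbove j) 1, mem_filter.2
      ⟨mem_shad.2 ⟨v, hvV, _, rfl⟩, ?_⟩, ?_⟩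
    · simp [hvc, (Fin.succAbove_ne i j).symm]
    · ext l
      simp [Fin.removeNth, Pi.single_apply]
  · refine card_le_card fun w hw => ?_
    obtain ⟨v, hv, j, rfl⟩ := mem_shad.1 hw
    obtain ⟨hvV, hvc⟩ := mem_filter.1 hv
    refine mem_filter.2 ⟨mem_shad.2 ⟨v, hvV, j, rfl⟩, ?_⟩
    simp only [Pi.add_apply]
    omega
  · rw [← card_image_of_injective V (add_left_injective (Pi.single i 1 : Fin (m + 1) → ℕ))]
    refine card_le_card fun w hw => ?_
    obtain ⟨v, hv, rfl⟩ := mem_image.1 hw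
    refine mem_filter.2 ⟨mem_shad.2 ⟨v, hv, i, rfl⟩, ?_⟩
    have := hc v hv
    simp
    omega

lemma card_image_removeNth {m : ℕ} (V : Finset (Fin (m + 1) → ℕ)) (i : Fin (m + 1)) (c : ℕ) :
    ((V.filter fun v => v i = c).image i.removeNth).card = (V.filter fun v => v i = c).card := by
  refine card_image_of_injOn fun v hv w hw h => ?_
  simp only [coe_filter, Set.mem_ofPred_eq] at hv hw
  rw [← Fin.insertNth_self_removeNth i v, ← Fin.insertNth_self_removeNth i w, h, hv.2, hw.2]

lemma card_split {m : ℕ} (V : Finset (Fin (m + 1) → ℕ)) (i : Fin (m + 1)) (c : ℕ)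
    (hc : ∀ v ∈ V, c ≤ v i) :
    (V.filter fun v => c < v i).card + (V.filter fun v => v i = c).card = V.card := by
  rw [← card_filter_add_card_filter_not (s := V) (fun v => c < v i)]
  congr 2
  refine filter_congr fun v hv => ?_
  have := hc v hv
  omega

/-- Macaulay's lower bound for the growth of a set of monomials in `m + 1` variables; the degrees
need not agree. -/
lemma macUp_le_card_shad (m : ℕ) : ∀ V : Finset (Fin (m + 1) → ℕ),
    macUp m V.card ≤ (shad V).card := by
  induction m with
  | zero =>
    intro V
    have := shad_split V 0 0 fun _ _ => Nat.zero_le _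
    simp only [macUp]
    omega
  | succ m ih =>
    intro V
    induction hh : V.card using Nat.strong_induction_on generalizing V with
    | _ h IH =>
    subst hh
    rcases V.eq_empty_or_nonempty with rfl | hne
    · simp [macUp_zero_right]
    obtain ⟨v₀, hv₀, hmin⟩ := exists_min_image V (fun v => v 0) hne
    have hsplit := shad_split V 0 (v₀ 0) hmin
    have hcard := card_split V 0 (v₀ 0) hmin
    have hD : 0 < (V.filter fun v => v 0 = v₀ 0).card :=
      card_pos.2 ⟨v₀, mem_filter.2 ⟨hv₀, rfl⟩⟩
    have h1 := ih ((V.filter fun v => v 0 = v₀ 0).image (Fin.removeNth 0))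
    rw [card_image_removeNth] at h1
    have h2 := IH _ (by omega) (V.filter fun v => v₀ 0 < v 0) rfl
    have h3 := macUp_add_le m (V.filter fun v => v₀ 0 < v 0).card
      (V.filter fun v => v 0 = v₀ 0).card
    rw [hcard] at h3
    omega

lemma gcdMon_le {n : ℕ} {V : Finset (Fin n → ℕ)} {v : Fin n → ℕ} (hv : v ∈ V) (j : Fin n) :
    gcdMon V j ≤ v j :=
  Nat.sInf_le ⟨v, hv, rfl⟩

lemma Kset_eq {n : ℕ} {V : Finset (Fin n → ℕ)} (hV : ¬ V.card ≤ 1) (i : Fin n) :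
    Kset V i = V.filter fun v => gcdMon V i < v i := by
  rw [Kset, if_neg hV]
  refine filter_congr fun v hv => ⟨fun h => by simpa using h i, fun h j => ?_⟩
  rcases eq_or_ne j i with rfl | hj
  · simpa using h
  · simpa [Pi.single_apply, hj] using gcdMon_le hv j

end MacaulayGrowth

open MacaulayGrowth in
/-- For `n ≥ 2` and a nonempty set `V` of monomials of degree `d` in
`K[x_1,…,x_n]`, one has `|MV| ≥ |K_i(V)|^{<n-1>} + |D_i(V)|^{<n-2>}` for every `i`. -/
theorem shad_card_ge {n d : ℕ} (hn : 2 ≤ n) (V : Finset (Fin n → ℕ)) (hne : V.Nonempty)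
    (hdeg : ∀ v ∈ V, ∑ i, v i = d) (i : Fin n) :
    macUp (n - 1) (Kset V i).card + macUp (n - 2) (Dset V i).card ≤ (shad V).card := by
  obtain ⟨m, rfl⟩ : ∃ m, n = m + 1 + 1 := ⟨n - 2, by omega⟩
  change macUp (m + 1) _ + macUp m _ ≤ _
  by_cases hV : V.card ≤ 1
  · have h := macUp_le_card_shad (m + 1) V
    simpa [Dset, Kset, hV, macUp_zero_right] using h
  · have hc : ∀ v ∈ V, gcdMon V i ≤ v i := fun v hv => gcdMon_le hv i
    have hcard := card_split V i _ hc
    have hD : (Dset V i).card = (V.filter fun v => v i = gcdMon V i).card := by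
      rw [Dset, card_sdiff_of_subset (by rw [Kset_eq hV]; exact filter_subset _ _), Kset_eq hV]
      omega
    have hsplit := shad_split V i _ hc
    have h1 := macUp_le_card_shad m ((V.filter fun v => v i = gcdMon V i).image i.removeNth)
    rw [card_image_removeNth] at h1
    have h2 := macUp_le_card_shad (m + 1) (V.filter fun v => gcdMon V i < v i)
    rw [hD, Kset_eq hV]
    omega
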